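/- arXiv:2501.17016 — 2 statements merged into one kernel-verified Lean document; each statement's English description precedes it below -/
import Mathlib

section
/- Under Assumption (A), suppose f_∞ is finite at every point of Γ_∞. Then f_∞ : Γ_∞ → ℝ is concave, invariant under permutations of the coordinates, monotone nondecreasing in each variable, and strictly positive on Γ_∞. -/
open Filter

/-- Assumption (A) from the paper: `Γ ⊆ ℝⁿ` is an open convex symmetric cone with
`Γₙ ⊆ Γ ⊆ Γ₁`, and `f : Γ → (0,∞)` is smooth, symmetric, concave, with positive partial
derivatives, vanishing at the boundary of `Γ`, and `f(Rλ) → +∞` as `R → +∞`. -/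
structure AssumptionA (n : ℕ) (Γ : Set (Fin n → ℝ)) (f : (Fin n → ℝ) → ℝ) : Prop where
  isOpen : IsOpen Γ
  convex : Convex ℝ Γ
  cone : ∀ x ∈ Γ, ∀ t : ℝ, 0 < t → t • x ∈ Γ
  perm_invariant : ∀ x ∈ Γ, ∀ σ : Equiv.Perm (Fin n), (fun i => x (σ i)) ∈ Γ
  orthant_subset : {x : Fin n → ℝ | ∀ i, 0 < x i} ⊆ Γ
  subset_halfspace : Γ ⊆ {x : Fin n → ℝ | 0 < ∑ i, x i}
  f_pos : ∀ x ∈ Γ, 0 < f x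
  f_smooth : ContDiffOn ℝ (⊤ : ℕ∞) f Γ
  f_perm_invariant : ∀ x ∈ Γ, ∀ σ : Equiv.Perm (Fin n), f (fun i => x (σ i)) = f x
  f_concave : ConcaveOn ℝ Γ f
  f_deriv_pos : ∀ x ∈ Γ, ∀ i : Fin n, 0 < fderiv ℝ f x (Pi.single i 1)
  f_boundary_zero : ∀ x₀ ∈ frontier Γ, Tendsto f (nhdsWithin x₀ Γ) (nhds 0)
  f_proper : ∀ x ∈ Γ, Tendsto (fun R : ℝ => f (R • x)) atTop atTop

/-- `Γ_∞`: the set of `λ ∈ ℝⁿ` such that for every `i`, replacing the `i`-th coordinate by any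
sufficiently large `R` lands in `Γ`. -/
def GammaInfty (n : ℕ) (Γ : Set (Fin n → ℝ)) : Set (Fin n → ℝ) :=
  {x | ∀ i : Fin n, ∃ R₀ : ℝ, ∀ R ≥ R₀, Function.update x i R ∈ Γ}

/-- `f_{∞,i}(λ) = lim_{R→+∞} f(λ₁,…,λ_{i−1},R,λ_{i+1},…,λₙ)`, realized as a limsup in `EReal`
(the limit exists in `(0,+∞]` since `f` is increasing in `λᵢ`). -/
noncomputable def fInftyi (n : ℕ) (f : (Fin n → ℝ) → ℝ) (i : Fin n) (x : Fin n → ℝ) : EReal :=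
  Filter.limsup (fun R : ℝ => ((f (Function.update x i R) : ℝ) : EReal)) Filter.atTop

/-- `f_∞(λ) = min_{1 ≤ i ≤ n} f_{∞,i}(λ)`, with values in `(0,+∞]`. -/
noncomputable def fInfty (n : ℕ) (f : (Fin n → ℝ) → ℝ) (x : Fin n → ℝ) : EReal :=
  ⨅ i : Fin n, fInftyi n f i x

theorem aux_mem {n : ℕ} {Γ : Set (Fin n → ℝ)} {f : (Fin n → ℝ) → ℝ}
    (hA : AssumptionA n Γ f) {x : Fin n → ℝ} (hx : x ∈ Γ) {y : Fin n → ℝ}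
    (hxy : ∀ i, x i ≤ y i) : y ∈ Γ := by
  have hc : Tendsto (fun ε : ℝ => (fun i => x i - ε)) (nhds 0) (nhds x) := by
    have : Continuous (fun ε : ℝ => (fun i => x i - ε)) := by fun_prop
    simpa using this.tendsto 0
  have h1 := hc.eventually (hA.isOpen.mem_nhds hx)
  have h2 : ∀ᶠ ε in nhdsWithin (0:ℝ) (Set.Ioi 0), (fun i => x i - ε) ∈ Γ :=
    h1.filter_mono nhdsWithin_le_nhds
  obtain ⟨ε, hε, hpos⟩ := (h2.and self_mem_nhdsWithin).exists
  have hpos : 0 < ε := hpos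
  have h3 : (fun i => y i - x i + ε) ∈ Γ := hA.orthant_subset (fun i => by
    have := hxy i
    show 0 < y i - x i + ε
    linarith)
  have h4 := hA.cone _ (hA.convex hε h3 (by norm_num : (0:ℝ) ≤ 1/2) (by norm_num : (0:ℝ) ≤ 1/2)
    (by norm_num)) 2 (by norm_num)
  convert h4 using 1
  ext i
  simp
  ring

theorem aux_mono {n : ℕ} {Γ : Set (Fin n → ℝ)} {f : (Fin n → ℝ) → ℝ}
    (hA : AssumptionA n Γ f) {x : Fin n → ℝ} (hx : x ∈ Γ) {y : Fin n → ℝ}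
    (hxy : ∀ i, x i ≤ y i) : f x ≤ f y := by
  have key : ∀ s : ℝ, 0 < s → s ≤ 1 → (1 - s) * f x ≤ f y := by
    intro s hs hs1
    have hz : (fun i => x i + (1/s) * (y i - x i)) ∈ Γ := aux_mem hA hx (fun i => by
      have : 0 ≤ (1/s) * (y i - x i) := mul_nonneg (by positivity) (sub_nonneg.2 (hxy i))
      linarith)
    have h := hA.f_concave.2 hx hz (by linarith : 0 ≤ 1 - s) hs.le (by ring)
    have e : (1 - s) • x + s • (fun i => x i + (1/s) * (y i - x i)) = y := by
      ext i
      simp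
      field_simp
      ring
    rw [e] at h
    have := mul_pos hs (hA.f_pos _ hz)
    simp only [smul_eq_mul] at h
    linarith
  have hfx := hA.f_pos x hx
  by_contra hlt
  push Not at hlt
  have hy := hA.f_pos y (aux_mem hA hx hxy)
  have h := key ((f x - f y) / (2 * f x)) (by apply div_pos <;> linarith)
    (by rw [div_le_one (by linarith)]; linarith)
  have e : (1 - (f x - f y) / (2 * f x)) * f x = (f x + f y) / 2 := by
    field_simp
    ring
  linarith

theorem aux_tendsto {n : ℕ} {Γ : Set (Fin n → ℝ)} {f : (Fin n → ℝ) → ℝ}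
    (hA : AssumptionA n Γ f) {x : Fin n → ℝ} (hx : x ∈ GammaInfty n Γ) (i : Fin n) :
    Tendsto (fun R : ℝ => ((f (Function.update x i R) : ℝ) : EReal)) atTop
      (nhds (fInftyi n f i x)) := by
  obtain ⟨R₀, hR⟩ := hx i
  have hm : Monotone (fun R : ℝ => ((f (Function.update x i (max R R₀)) : ℝ) : EReal)) := by
    intro R S hRS
    apply EReal.coe_le_coe_iff.2
    refine aux_mono hA (hR (max R R₀) (le_max_right R R₀)) (fun j => ?_)
    have h : max R R₀ ≤ max S R₀ := max_le_max hRS le_rfl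
    by_cases hj : j = i
    · subst hj
      simpa using h
    · simp [hj]
  have ht := tendsto_atTop_iSup hm
  have ht' : Tendsto (fun R : ℝ => ((f (Function.update x i R) : ℝ) : EReal)) atTop
      (nhds (⨆ R : ℝ, ((f (Function.update x i (max R R₀)) : ℝ) : EReal))) := by
    refine ht.congr' ?_
    filter_upwards [eventually_ge_atTop R₀] with R h
    rw [max_eq_left h]
  have e : fInftyi n f i x = _ := ht'.limsup_eq
  rw [e]
  exact ht'

theorem aux_pos {n : ℕ} {Γ : Set (Fin n → ℝ)} {f : (Fin n → ℝ) → ℝ}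
    (hA : AssumptionA n Γ f) {x : Fin n → ℝ} (hx : x ∈ GammaInfty n Γ) (i : Fin n) :
    0 < fInftyi n f i x := by
  obtain ⟨R₀, hR⟩ := hx i
  have h1 : (0 : EReal) < ((f (Function.update x i R₀) : ℝ) : EReal) :=
    EReal.coe_pos.2 (hA.f_pos _ (hR _ le_rfl))
  refine h1.trans_le (ge_of_tendsto (aux_tendsto hA hx i) ?_)
  filter_upwards [eventually_ge_atTop R₀] with R h
  apply EReal.coe_le_coe_iff.2
  apply aux_mono hA (hR _ le_rfl)
  intro j
  exact update_le_update_iff.2 ⟨h, fun _ _ => le_rfl⟩ j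

theorem aux_update {n : ℕ} (x y : Fin n → ℝ) (a b : ℝ) (hab : a + b = 1) (i : Fin n) (R : ℝ) :
    Function.update (a • x + b • y) i R
      = a • Function.update x i R + b • Function.update y i R := by
  ext j
  by_cases h : j = i
  · subst h
    simp [← add_mul, hab]
  · simp [h]

/-- Lemma 2.5 of the paper, second part: if `f_∞` is finite at every point of `Γ_∞`, then
`f_∞ : Γ_∞ → ℝ` is concave, symmetric, monotone nondecreasing in each variable, and strictly
positive on `Γ_∞`. -/
theorem stmt_4 (n : ℕ) (Γ : Set (Fin n → ℝ)) (f : (Fin n → ℝ) → ℝ)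
    (hA : AssumptionA n Γ f)
    (hfin : ∀ x ∈ GammaInfty n Γ, fInfty n f x ≠ ⊤) :
    ConcaveOn ℝ (GammaInfty n Γ) (fun x => (fInfty n f x).toReal) ∧
    (∀ x ∈ GammaInfty n Γ, ∀ σ : Equiv.Perm (Fin n),
      fInfty n f (fun i => x (σ i)) = fInfty n f x) ∧
    (∀ x ∈ GammaInfty n Γ, ∀ y ∈ GammaInfty n Γ, (∀ i, x i ≤ y i) →
      (fInfty n f x).toReal ≤ (fInfty n f y).toReal) ∧
    (∀ x ∈ GammaInfty n Γ, 0 < (fInfty n f x).toReal) := by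
  have hn : Nonempty (Fin n) := by
    rcases n with _ | n
    · have h1 := hA.subset_halfspace (hA.orthant_subset (a := fun _ => 0) (fun i => i.elim0))
      simp at h1
    · exact ⟨0⟩
  have hpos : ∀ x ∈ GammaInfty n Γ, 0 < fInfty n f x := by
    intro x hx
    obtain ⟨i, hi⟩ := exists_eq_ciInf_of_finite (f := fun i => fInftyi n f i x)
    unfold fInfty
    rw [← hi]
    exact aux_pos hA hx i
  have hcoe : ∀ x ∈ GammaInfty n Γ, (((fInfty n f x).toReal : ℝ) : EReal) = fInfty n f x :=
    fun x hx => EReal.coe_toReal (hfin x hx) (ne_bot_of_gt (hpos x hx))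
  have hconv : Convex ℝ (GammaInfty n Γ) := by
    intro x hx y hy a b ha hb hab i
    obtain ⟨R, hR⟩ := hx i
    obtain ⟨S, hS⟩ := hy i
    refine ⟨max R S, fun T hT => ?_⟩
    rw [aux_update x y a b hab]
    exact hA.convex (hR T ((le_max_left _ _).trans hT)) (hS T ((le_max_right _ _).trans hT))
      ha hb hab
  refine ⟨⟨hconv, ?_⟩, ?_, ?_, ?_⟩
  · intro x hx y hy a b ha hb hab
    have hz := hconv hx hy ha hb hab
    apply EReal.coe_le_coe_iff.1
    rw [hcoe _ hz]
    refine le_iInf fun i => ?_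
    by_contra hlt
    push Not at hlt
    obtain ⟨r, hr1, hr2⟩ := EReal.lt_iff_exists_real_btwn.1 hlt
    have hr2 := EReal.coe_lt_coe_iff.1 hr2
    simp only [smul_eq_mul] at hr2
    refine absurd (ge_of_tendsto (aux_tendsto hA hz i) ?_) (not_le.2 hr1)
    set X := (fInfty n f x).toReal with hX
    set Y := (fInfty n f y).toReal with hY
    set ε := a * X + b * Y - r with hε
    have hεp : 0 < ε := by linarith
    have ev : ∀ w ∈ GammaInfty n Γ, ∀ᶠ R in atTop,
        (fInfty n f w).toReal - ε < f (Function.update w i R) := by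
      intro w hw
      have h1 : (((fInfty n f w).toReal - ε : ℝ) : EReal) < fInftyi n f i w := by
        refine lt_of_lt_of_le ?_ (iInf_le (fun i => fInftyi n f i w) i)
        change _ < fInfty n f w
        rw [← hcoe w hw]
        apply EReal.coe_lt_coe_iff.2
        simp only [EReal.toReal_coe]
        linarith
      filter_upwards [(aux_tendsto hA hw i).eventually (lt_mem_nhds h1)] with R h
      exact EReal.coe_lt_coe_iff.1 h
    obtain ⟨R, hR⟩ := hx i
    obtain ⟨S, hS⟩ := hy i
    filter_upwards [ev x hx, ev y hy, eventually_ge_atTop R, eventually_ge_atTop S]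
      with T h1 h2 h3 h4
    apply EReal.coe_le_coe_iff.2
    rw [aux_update x y a b hab]
    have h := hA.f_concave.2 (hR T h3) (hS T h4) ha hb hab
    simp only [smul_eq_mul] at h
    have h5 := mul_le_mul_of_nonneg_left h1.le ha
    have h6 := mul_le_mul_of_nonneg_left h2.le hb
    have h7 : a * (X - ε) + b * (Y - ε) = r := by
      have : a * (X - ε) + b * (Y - ε) = a * X + b * Y - (a + b) * ε := by ring
      rw [this, hab, hε]
      ring
    linarith
  · intro x hx σ
    unfold fInfty
    refine Equiv.iInf_congr σ fun i => ?_
    unfold fInftyi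
    obtain ⟨R₀, hR⟩ := hx (σ i)
    apply limsup_congr
    filter_upwards [eventually_ge_atTop R₀] with R h
    rw [← hA.f_perm_invariant _ (hR R h) σ]
    congr 2
    ext j
    by_cases hj : j = i
    · subst hj
      simp
    · simp [hj]
  · intro x hx y hy hxy
    apply EReal.coe_le_coe_iff.1
    rw [hcoe x hx, hcoe y hy]
    refine iInf_mono fun i => ?_
    obtain ⟨R₀, hR⟩ := hx i
    refine le_of_tendsto_of_tendsto (aux_tendsto hA hx i) (aux_tendsto hA hy i) ?_
    filter_upwards [eventually_ge_atTop R₀] with R h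
    apply EReal.coe_le_coe_iff.2
    apply aux_mono hA (hR R h)
    intro j
    by_cases hj : j = i
    · subst hj
      simp
    · simpa [hj] using hxy j
  · intro x hx
    exact EReal.toReal_pos (hpos x hx) (hfin x hx)
end

section
/- Under Assumption (A), suppose f_∞ is finite at every point of Γ_∞. Then lim_{R→+∞} f_∞(Rλ) = +∞ for every λ ∈ Γ_∞; moreover the divergence is uniform on compact subsets: for every compact K ⊆ Γ_∞ and every B > 0 there exists R₁ > 0 such that f_∞(Rλ) ≥ B for all λ ∈ K and all R ≥ R₁. -/
open Filter

theorem aux_add {n : ℕ} {Γ : Set (Fin n → ℝ)} {f : (Fin n → ℝ) → ℝ}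
    (hA : AssumptionA n Γ f) {a b : Fin n → ℝ} (ha : a ∈ Γ) (hb : b ∈ Γ) : a + b ∈ Γ := by
  have h := hA.convex ha hb (by norm_num : (0:ℝ) ≤ 1/2) (by norm_num : (0:ℝ) ≤ 1/2) (by norm_num)
  have h2 := hA.cone _ h 2 (by norm_num)
  convert h2 using 1
  ext i
  simp
  ring

theorem aux_mono_s7 {n : ℕ} {Γ : Set (Fin n → ℝ)} {f : (Fin n → ℝ) → ℝ}
    (hA : AssumptionA n Γ f) {a b : Fin n → ℝ} (ha : a ∈ Γ) (hb : b ∈ Γ) :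
    f a ≤ f (a + b) := by
  have key : ∀ t : ℝ, 1 < t → (1 - t⁻¹) * f a ≤ f (a + b) := by
    intro t ht
    have ht0 : 0 < t := by linarith
    have hm : a + t • b ∈ Γ := aux_add hA ha (hA.cone _ hb t ht0)
    have h1 : t⁻¹ ≤ 1 := inv_le_one_of_one_le₀ ht.le
    have hi : 0 < t⁻¹ := inv_pos.mpr ht0
    have h := hA.f_concave.2 ha hm (by linarith : 0 ≤ 1 - t⁻¹) hi.le (by ring)
    have he : (1 - t⁻¹) • a + t⁻¹ • (a + t • b) = a + b := by
      ext i
      simp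
      field_simp
      ring
    rw [he] at h
    have hp := hA.f_pos _ hm
    simp only [smul_eq_mul] at h
    nlinarith [mul_pos hi hp]
  have hl : Tendsto (fun t : ℝ => (1 - t⁻¹) * f a) atTop (nhds ((1 - 0) * f a)) :=
    (tendsto_const_nhds.sub tendsto_inv_atTop_zero).mul_const _
  have := le_of_tendsto hl ((eventually_gt_atTop 1).mono key)
  simpa using this

theorem aux_single {n : ℕ} {Γ : Set (Fin n → ℝ)} {f : (Fin n → ℝ) → ℝ}
    (hA : AssumptionA n Γ f) {a : Fin n → ℝ} (ha : a ∈ Γ) (i : Fin n) {R : ℝ} (hR : a i ≤ R) :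
    Function.update a i R ∈ Γ := by
  have hc : Tendsto (fun e : ℝ => a - fun _ => e) (nhdsWithin 0 (Set.Ioi 0)) (nhds a) := by
    have : Continuous (fun e : ℝ => a - fun _ : Fin n => e) := by fun_prop
    have h := (this.tendsto 0).mono_left (nhdsWithin_le_nhds (s := Set.Ioi 0))
    convert h using 2
    ext i
    simp
  obtain ⟨e, he, he0⟩ := ((hc.eventually (hA.isOpen.mem_nhds ha)).and self_mem_nhdsWithin).exists
  have he0 : 0 < e := he0
  have ho : (fun j => e + (Function.update a i R j - a j)) ∈ Γ := by
    apply hA.orthant_subset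
    intro j
    by_cases hj : j = i
    · subst hj
      simp
      linarith
    · simp [hj, he0]
  convert aux_add hA he ho using 1
  ext j
  simp only [Pi.add_apply, Pi.sub_apply]
  ring

theorem aux_upd {n : ℕ} (x : Fin n → ℝ) (i : Fin n) {R : ℝ} (hR : 0 < R) (S : ℝ) :
    Function.update (R • x) i S = R • Function.update x i (S / R) := by
  ext j
  by_cases hj : j = i
  · subst hj
    simp
    field_simp
  · simp [hj]

theorem aux_loc' {n : ℕ} {Γ : Set (Fin n → ℝ)} {f : (Fin n → ℝ) → ℝ}
    (hA : AssumptionA n Γ f) {x : Fin n → ℝ} (hx : x ∈ GammaInfty n Γ) (B : ℝ) (i : Fin n) :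
    ∀ᶠ p : (Fin n → ℝ) × ℝ in nhds x ×ˢ atTop, (B : EReal) ≤ fInftyi n f i (p.2 • p.1) := by
  obtain ⟨R₀, h0⟩ := hx i
  have hy := h0 R₀ le_rfl
  set y := Function.update x i R₀ with hydef
  have hy2 : (1/2 : ℝ) • y ∈ Γ := hA.cone _ hy _ (by norm_num)
  have hU : ∀ᶠ z in nhds x, Function.update z i R₀ - (1/2 : ℝ) • y ∈ Γ := by
    have hc : Continuous (fun z : Fin n → ℝ => Function.update z i R₀ - (1/2 : ℝ) • y) := by
      fun_prop
    apply hc.tendsto x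
    apply hA.isOpen.mem_nhds
    rw [← hydef]
    convert hy2 using 1
    ext j
    simp
    ring
  have hV : ∀ᶠ R : ℝ in atTop, 0 < R ∧ B ≤ f (R • ((1/2 : ℝ) • y)) :=
    (eventually_gt_atTop 0).and ((hA.f_proper _ hy2).eventually_ge_atTop B)
  filter_upwards [hU.prod_mk hV] with p hp
  obtain ⟨hz, hR, hB⟩ := hp
  obtain ⟨z, R⟩ := p
  simp only at hz hR hB ⊢
  unfold fInftyi
  apply le_limsup_of_frequently_le'
  apply Eventually.frequently
  filter_upwards [eventually_ge_atTop (R * R₀)] with S hS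
  rw [EReal.coe_le_coe_iff, aux_upd z i hR S]
  have hS' : R₀ ≤ S / R := by
    rw [le_div_iff₀ hR]; linarith
  have h1 := aux_single hA hz i (R := S / R - ((1/2 : ℝ) • y) i) (by
    simp only [Pi.sub_apply, Function.update_self]; linarith)
  have h2 := aux_mono_s7 hA (hA.cone _ hy2 R hR) (hA.cone _ h1 R hR)
  refine hB.trans (h2.trans (le_of_eq ?_))
  congr 1
  rw [← smul_add]
  congr 1
  ext j
  by_cases hj : j = i
  · subst hj
    simp
  · simp [hj]

theorem aux_cone {n : ℕ} {Γ : Set (Fin n → ℝ)} {f : (Fin n → ℝ) → ℝ}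
    (hA : AssumptionA n Γ f) {x : Fin n → ℝ} (hx : x ∈ GammaInfty n Γ) {R : ℝ} (hR : 0 < R) :
    R • x ∈ GammaInfty n Γ := by
  intro i
  obtain ⟨R₀, h0⟩ := hx i
  refine ⟨R * R₀, fun S hS => ?_⟩
  rw [aux_upd x i hR S]
  refine hA.cone _ (h0 _ ?_) R hR
  rw [ge_iff_le, le_div_iff₀ hR]; linarith

/-- Lemma 2.7 of the paper: if `f_∞` is finite on `Γ_∞`, then `f_∞(Rλ) → +∞` as `R → +∞` for
every `λ ∈ Γ_∞`, uniformly on compact subsets of `Γ_∞`. -/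
theorem stmt_7 (n : ℕ) (Γ : Set (Fin n → ℝ)) (f : (Fin n → ℝ) → ℝ)
    (hA : AssumptionA n Γ f)
    (hfin : ∀ x ∈ GammaInfty n Γ, fInfty n f x ≠ ⊤) :
    (∀ x ∈ GammaInfty n Γ,
      Tendsto (fun R : ℝ => (fInfty n f (R • x)).toReal) atTop atTop) ∧
    (∀ K ⊆ GammaInfty n Γ, IsCompact K → ∀ B : ℝ, 0 < B →
      ∃ R₁ : ℝ, 0 < R₁ ∧ ∀ x ∈ K, ∀ R : ℝ, R₁ ≤ R →
        B ≤ (fInfty n f (R • x)).toReal) := by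
  have main : ∀ K ⊆ GammaInfty n Γ, IsCompact K → ∀ B : ℝ, 0 < B →
      ∃ R₁ : ℝ, 0 < R₁ ∧ ∀ x ∈ K, ∀ R : ℝ, R₁ ≤ R →
        B ≤ (fInfty n f (R • x)).toReal := by
    intro K hK hc B hB
    have hev : ∀ x ∈ K, ∀ᶠ p : (Fin n → ℝ) × ℝ in nhds x ×ˢ atTop,
        (B : EReal) ≤ fInfty n f (p.2 • p.1) := by
      intro x hx
      have h := eventually_all.mpr (fun i => aux_loc' hA (hK hx) B i)
      filter_upwards [h] with p hp
      exact le_iInf hp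
    have hex : ∃ R₁ : ℝ, 0 < R₁ ∧ ∀ x ∈ K, ∀ R : ℝ, R₁ ≤ R →
        (B : EReal) ≤ fInfty n f (R • x) := by
      refine hc.induction_on (p := fun s => ∃ R₁ : ℝ, 0 < R₁ ∧ ∀ x ∈ s, ∀ R : ℝ, R₁ ≤ R →
        (B : EReal) ≤ fInfty n f (R • x)) ⟨1, one_pos, by simp⟩ ?_ ?_ ?_
      · rintro s t hst ⟨R, h, h'⟩
        exact ⟨R, h, fun x hx => h' x (hst hx)⟩
      · rintro s t ⟨R, h, h'⟩ ⟨T, k, k'⟩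
        refine ⟨max R T, lt_max_of_lt_left h, ?_⟩
        rintro x (hx | hx) S hS
        · exact h' x hx S ((le_max_left _ _).trans hS)
        · exact k' x hx S ((le_max_right _ _).trans hS)
      · intro x hx
        obtain ⟨pa, hpa, pb, hpb, h⟩ := eventually_prod_iff.mp (hev x hx)
        obtain ⟨R, hR⟩ := eventually_atTop.mp hpb
        refine ⟨{z | pa z}, mem_nhdsWithin_of_mem_nhds hpa, max R 1,
          lt_max_of_lt_right one_pos, ?_⟩
        intro z hz S hS
        exact h hz (hR S ((le_max_left _ _).trans hS))
    obtain ⟨R₁, h1, h2⟩ := hex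
    refine ⟨R₁, h1, fun x hx R hR => ?_⟩
    have h3 := EReal.toReal_le_toReal (h2 x hx R hR) (EReal.coe_ne_bot B)
      (hfin _ (aux_cone hA (hK hx) (h1.trans_le hR)))
    simpa using h3
  refine ⟨fun x hx => ?_, main⟩
  rw [tendsto_atTop]
  intro B
  obtain ⟨R₁, -, h⟩ := main {x} (by simpa using hx) isCompact_singleton (max B 1)
    (lt_max_of_lt_right one_pos)
  filter_upwards [eventually_ge_atTop R₁] with R hR
  exact (le_max_left _ _).trans (h x rfl R hR)
end
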